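/- Let x = (x_1,…,x_{n+1}) be a melody of real numbers (n ≥ 1) that begins and ends with the same note, i.e., x_1 = x_{n+1}, and suppose D(x) ≠ 0. Then the retrograde x^r = (x_{n+1},…,x_1) satisfies D(x^r) ≠ 0 and s(x^r) = s(x); i.e., a melody and its retrograde have the same slope. -/

import Mathlib

open Finset

/-- The numerator `N(x) = n·∑ xᵢxᵢ₊₁ − (∑_{i=1}^n xᵢ)(∑_{i=2}^{n+1} xᵢ)` of the
least-squares slope of the M-graph of the melody `x = (x_1, …, x_{n+1})`
(indexed here as `x 0, …, x n`). -/
noncomputable def melN (n : ℕ) (x : ℕ → ℝ) : ℝ :=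
  n * ∑ i ∈ Finset.range n, x i * x (i + 1) -
    (∑ i ∈ Finset.range n, x i) * (∑ i ∈ Finset.range n, x (i + 1))

/-- The denominator `D(x) = n·∑_{i=1}^n xᵢ² − (∑_{i=1}^n xᵢ)²` of the
least-squares slope of the M-graph of the melody `x = (x_1, …, x_{n+1})`. -/
noncomputable def melD (n : ℕ) (x : ℕ → ℝ) : ℝ :=
  n * ∑ i ∈ Finset.range n, (x i) ^ 2 - (∑ i ∈ Finset.range n, x i) ^ 2

/-- The slope `s(x) = N(x)/D(x)` of the M-graph of the melody `x`. -/
noncomputable def melS (n : ℕ) (x : ℕ → ℝ) : ℝ := melN n x / melD n x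

/-!
Retrograde reverses the order of the pairs of consecutive notes and swaps the entries of each pair;
`N` is symmetric in the two entries, so it is invariant for every melody. The denominator of the
retrograde is that of the last `n` notes; when `x 0 = x n` these are the first `n` notes up to
a cyclic rotation, so `D` is invariant as well.
-/

section Reversal

variable {M : Type*} [AddCommMonoid M] (n : ℕ)

theorem sum_range_reflect_consecutive (g : ℕ → ℕ → M) :
    ∑ i ∈ range n, g (n - i) (n - (i + 1)) = ∑ i ∈ range n, g (i + 1) i := by
  rw [← sum_range_reflect (fun i => g (i + 1) i) n]
  refine sum_congr rfl fun i hi => ?_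
  have hin : i < n := mem_range.mp hi
  congr 1 <;> omega

theorem sum_range_comp_sub (f : ℕ → M) :
    ∑ i ∈ range n, f (n - i) = ∑ i ∈ range n, f (i + 1) :=
  sum_range_reflect_consecutive n fun i _ => f i

theorem sum_range_comp_sub_succ (f : ℕ → M) :
    ∑ i ∈ range n, f (n - (i + 1)) = ∑ i ∈ range n, f i :=
  sum_range_reflect_consecutive n fun _ j => f j

end Reversal

theorem sum_range_comp_succ_of_eq {M : Type*} [AddCancelCommMonoid M] {f : ℕ → M} {n : ℕ}
    (h : f 0 = f n) : ∑ i ∈ range n, f (i + 1) = ∑ i ∈ range n, f i := by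
  apply add_right_cancel (b := f 0)
  rw [← sum_range_succ', sum_range_succ, h]

theorem melN_retrograde (n : ℕ) (x : ℕ → ℝ) : melN n (fun i => x (n - i)) = melN n x := by
  have hprod : ∑ i ∈ range n, x (n - i) * x (n - (i + 1)) = ∑ i ∈ range n, x i * x (i + 1) :=
    (sum_range_reflect_consecutive n fun i j => x i * x j).trans
      (sum_congr rfl fun _ _ => mul_comm _ _)
  unfold melN
  rw [hprod, sum_range_comp_sub n x, sum_range_comp_sub_succ n x,
    mul_comm (∑ i ∈ range n, x (i + 1))]

theorem melD_retrograde_eq_melD_succ (n : ℕ) (x : ℕ → ℝ) :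
    melD n (fun i => x (n - i)) = melD n (fun i => x (i + 1)) := by
  unfold melD
  rw [sum_range_comp_sub n x, sum_range_comp_sub n (fun i => x i ^ 2)]

theorem melD_succ_of_eq {n : ℕ} {x : ℕ → ℝ} (hx : x 0 = x n) :
    melD n (fun i => x (i + 1)) = melD n x := by
  have hsq : x 0 ^ 2 = x n ^ 2 := congrArg (· ^ 2) hx
  unfold melD
  rw [sum_range_comp_succ_of_eq hx, sum_range_comp_succ_of_eq (f := fun i => x i ^ 2) hsq]

/-- A melody beginning and ending with the same note has the same slope as its retrograde. -/
theorem melS_retrograde (n : ℕ) (hn : 1 ≤ n) (x : ℕ → ℝ) (hx : x 0 = x n)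
    (hD : melD n x ≠ 0) :
    melD n (fun i => x (n - i)) ≠ 0 ∧ melS n (fun i => x (n - i)) = melS n x := by
  have hdenom : melD n (fun i => x (n - i)) = melD n x :=
    (melD_retrograde_eq_melD_succ n x).trans (melD_succ_of_eq hx)
  refine ⟨hdenom ▸ hD, ?_⟩
  rw [melS, melS, hdenom, melN_retrograde]
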